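/- Let G be a finite abelian group of odd order m ≥ 3 and let M ⊆ G be a maximal skew set, i.e., M ∩ M^{(-1)} = ∅ and |M| = (m−1)/2. Let Dih G = G ⋊ ⟨t⟩ be the generalized dihedral group of G, where t has order 2 and acts on G by inversion, and set S = M ∪ Mt ⊆ Dih G. Then S is a (2m, m−1, (m−3)/2, (m−1)/2) partial sum set in Dih G. Moreover, the group Dih G × C₂ (C₂ the cyclic group of order 2) contains a (4m, 2m−1, m−1) sum set. -/

import Mathlib

/-!
Write `chi A` for the `ℤ`-valued indicator function of a subset `A` of a finite group, so that the
number of representations of `g` as a product of two elements of `A` is the convolution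
`∑ x, chi A x * chi A (x⁻¹ * g)`.

A maximal skew set `M` satisfies `chi M x + chi M x⁻¹ = 1 - [x = 1]`: the sets `M`, `M⁻¹` and `{1}`
are disjoint and their sizes add up to `m`. In the group ring this reads `M + M⁻¹ = G - 1`, and
since `t` inverts `G` it gives, for `S = M + M t`,
`S² = M (M + M⁻¹) (1 + t) = M (G - 1) (1 + t) = |M| • Dih G - S`,
an identity that contains the partial sum set property (`conv_dihedral`).

For the sum set, let `z` generate `C₂` and take `T = (S + 1) + S z`. The identity
`S² = k • H - S` with `H = Dih G` and `k = |M|` gives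
`(S + 1)² + S² = 2k • H + 1` and `(S + 1) S + S (S + 1) = 2k • H`, so every nonidentity element of
`H × C₂` has `2k = m - 1` representations (`sumReps_double`).
-/

open scoped Pointwise

/-- The number of ways to write `g` as a product of two elements of `S`. -/
noncomputable def sumReps {G : Type*} [Group G] (S : Set G) (g : G) : ℕ :=
  Set.ncard {p : G × G | p.1 ∈ S ∧ p.2 ∈ S ∧ p.1 * p.2 = g}

/-- `S` is a `(v,k,λ,μ)` partial sum set: every nonidentity element of `S` has exactly `λ`
representations as a product of two elements of `S`, and every nonidentity element outside
`S` has exactly `μ` such representations. -/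
def IsPartialSumSet {G : Type*} [Group G] (S : Set G) (lam mu : ℕ) : Prop :=
  (∀ g ∈ S, g ≠ 1 → sumReps S g = lam) ∧ (∀ g : G, g ∉ S → g ≠ 1 → sumReps S g = mu)

/-- `S` is a `(v,k,μ)` sum set: every nonidentity element of `G` has exactly `μ`
representations as a product of two elements of `S`. -/
def IsSumSet {G : Type*} [Group G] (S : Set G) (mu : ℕ) : Prop :=
  ∀ g : G, g ≠ 1 → sumReps S g = mu

/-- The inversion automorphism of a commutative group, as an action of `Multiplicative (ZMod 2)`:
the nontrivial element acts on `G` by inversion. -/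
def invHom (G : Type*) [CommGroup G] : Multiplicative (ZMod 2) →* MulAut G where
  toFun x := if x.toAdd = 0 then 1 else MulEquiv.inv G
  map_one' := by simp
  map_mul' x y := by
    have h2 : ∀ u : ZMod 2, u = 0 ∨ u = 1 := by decide
    have hinv : (MulEquiv.inv G) * (MulEquiv.inv G) = 1 := by
      ext g; simp
    rcases h2 x.toAdd with hx | hx <;> rcases h2 y.toAdd with hy | hy <;>
      simp [toAdd_mul, hx, hy, hinv, show (1 + 1 : ZMod 2) = 0 from by decide]

/-- The generalized dihedral group `Dih G = G ⋊ ⟨t⟩` of a commutative group `G`,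
where `t` has order 2 and acts on `G` by inversion. -/
abbrev GenDihedral (G : Type*) [CommGroup G] :=
  SemidirectProduct G (Multiplicative (ZMod 2)) (invHom G)

/-- The reflection `t` of the generalized dihedral group. -/
def GenDihedral.t (G : Type*) [CommGroup G] : GenDihedral G :=
  SemidirectProduct.inr (Multiplicative.ofAdd (1 : ZMod 2))

/-- The `ℤ`-valued indicator function of a set. -/
noncomputable def chi {H : Type*} (S : Set H) (x : H) : ℤ :=
  open Classical in if x ∈ S then 1 else 0

lemma chi_congr {H K : Type*} {S : Set H} {T : Set K} {x : H} {y : K} (h : x ∈ S ↔ y ∈ T) :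
    chi S x = chi T y := by
  by_cases hx : x ∈ S
  · simp [chi, hx, h.1 hx]
  · simp [chi, hx, mt h.2 hx]

lemma sum_chi {H : Type*} [Fintype H] (S : Set H) : ∑ x, chi S x = S.ncard := by
  classical
  simp [chi, Set.ncard_eq_toFinset_card', Set.toFinset]

/-- The number of representations is the convolution square of the indicator function. -/
lemma sumReps_eq_sum {H : Type*} [Group H] [Fintype H] (S : Set H) (g : H) :
    (sumReps S g : ℤ) = ∑ x, chi S x * chi S (x⁻¹ * g) := by
  have h : {p : H × H | p.1 ∈ S ∧ p.2 ∈ S ∧ p.1 * p.2 = g}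
      = (fun x => (x, x⁻¹ * g)) '' {x | x ∈ S ∧ x⁻¹ * g ∈ S} := by
    ext ⟨a, b⟩
    simp only [Set.mem_ofPred_eq, Set.mem_image, Prod.mk.injEq]
    constructor
    · rintro ⟨ha, hb, rfl⟩
      exact ⟨a, by simpa using ⟨ha, hb⟩, rfl, by simp⟩
    · rintro ⟨x, ⟨hx, hx'⟩, rfl, rfl⟩
      exact ⟨hx, hx', by simp⟩
  rw [sumReps, h, Set.ncard_image_of_injective _ (fun a b hab => (Prod.mk.inj hab).1), ← sum_chi]
  refine Finset.sum_congr rfl fun x _ => ?_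
  by_cases h1 : x ∈ S <;> by_cases h2 : x⁻¹ * g ∈ S <;> simp [chi, h1, h2]

lemma sum_C2 (F : Multiplicative (ZMod 2) → ℤ) :
    ∑ e, F e = F 1 + F (Multiplicative.ofAdd 1) :=
  Fin.sum_univ_two F

lemma C2_cases (e : Multiplicative (ZMod 2)) : e = 1 ∨ e = Multiplicative.ofAdd 1 := by
  revert e; decide

lemma C2_mul_self :
    (Multiplicative.ofAdd 1 : Multiplicative (ZMod 2)) * Multiplicative.ofAdd 1 = 1 := by
  decide

lemma C2_inv : (Multiplicative.ofAdd 1 : Multiplicative (ZMod 2))⁻¹ = Multiplicative.ofAdd 1 := by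
  decide

lemma C2_ne : (Multiplicative.ofAdd 1 : Multiplicative (ZMod 2)) ≠ 1 := by
  decide

/-- A maximal skew set contains exactly one of `x` and `x⁻¹` for each `x ≠ 1`. -/
lemma chi_add_chi_inv {G : Type*} [CommGroup G] [Fintype G] [DecidableEq G] {m : ℕ}
    (hm : Nat.card G = m) (hodd : Odd m) {M : Set G} (hskew : M ∩ M⁻¹ = ∅)
    (hMcard : M.ncard = (m - 1) / 2) (x : G) :
    chi M x + chi M x⁻¹ = 1 - if x = 1 then 1 else 0 := by
  have hdis : ∀ y, y ∈ M → y⁻¹ ∉ M := fun y hy hy' => by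
    have : y ∈ M ∩ M⁻¹ := ⟨hy, hy'⟩
    simp [hskew] at this
  have h1 : (1 : G) ∉ M := fun h => hdis 1 h (by simpa using h)
  have hle : ∀ y ∈ Finset.univ,
      chi M y + chi M y⁻¹ ≤ 1 - if y = (1 : G) then (1 : ℤ) else 0 := by
    intro y _
    by_cases hy : y = 1
    · subst hy; simp [chi, h1]
    · by_cases hM : y ∈ M
      · simp [chi, hM, hdis y hM, hy]
      · simp only [chi, hM, hy, if_false]
        split_ifs <;> simp
  -- Both sides have the same sum `m - 1` over `G`, so the pointwise inequality is an equality.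
  have hsum : ∑ y, (chi M y + chi M y⁻¹)
      = ∑ y : G, (1 - if y = (1 : G) then (1 : ℤ) else 0) := by
    have hinv : ∑ y, chi M y⁻¹ = ∑ y, chi M y := Equiv.sum_comp (Equiv.inv G) (chi M)
    rw [Finset.sum_add_distrib, hinv, sum_chi, hMcard, Finset.sum_sub_distrib]
    rw [Nat.card_eq_fintype_card] at hm
    obtain ⟨k, rfl⟩ := hodd
    simp [hm]
    ring
  exact (Finset.sum_eq_sum_iff_of_le hle).1 hsum x (Finset.mem_univ x)

/-- The set `(S ∪ {1}) ∪ S z` in `H × C₂`. -/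
def doubled {H : Type*} [Group H] (S : Set H) : Set (H × Multiplicative (ZMod 2)) :=
  {p | p.1 ∈ S ∨ p = 1}

section doubled

variable {H : Type*} [Group H] {S : Set H}

lemma mem_doubled (x : H) (e : Multiplicative (ZMod 2)) :
    (x, e) ∈ doubled S ↔ x ∈ S ∨ (x = 1 ∧ e = 1) :=
  or_congr Iff.rfl Prod.mk_eq_one

lemma chi_doubled_one [DecidableEq H] (h1 : 1 ∉ S) (x : H) :
    chi (doubled S) (x, 1) = chi S x + if x = 1 then 1 else 0 := by
  by_cases hx : x = 1
  · subst hx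
    have h2 : ((1 : H), (1 : Multiplicative (ZMod 2))) ∈ doubled S := Or.inr rfl
    simp [chi, h1, h2]
  · rw [if_neg hx, add_zero]
    exact chi_congr (by simp [mem_doubled, hx])

lemma chi_doubled_ofAdd (x : H) :
    chi (doubled S) (x, Multiplicative.ofAdd 1) = chi S x :=
  chi_congr (by simp only [mem_doubled, C2_ne, and_false, or_false])

lemma ncard_doubled [Fintype H] (h1 : 1 ∉ S) : (doubled S).ncard = 2 * S.ncard + 1 := by
  classical
  zify
  rw [← sum_chi, ← sum_chi, Fintype.sum_prod_type]
  simp only [sum_C2, chi_doubled_one h1, chi_doubled_ofAdd, Finset.sum_add_distrib]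
  simp
  ring

/-- If `S² = k • H - S` in the group ring, then `((S + 1) + S z)² = 2k • (H × C₂) + 1`;
this is the coefficient of a nonidentity element. -/
lemma sumReps_double [Fintype H] (h1 : 1 ∉ S) {k : ℤ}
    (hS : ∀ h, ∑ x, chi S x * chi S (x⁻¹ * h) = k - chi S h)
    {g : H × Multiplicative (ZMod 2)} (hg : g ≠ 1) :
    (sumReps (doubled S) g : ℤ) = 2 * k := by
  classical
  obtain ⟨h, e⟩ := g
  rw [sumReps_eq_sum, Fintype.sum_prod_type]
  simp only [sum_C2]
  rcases C2_cases e with rfl | rfl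
  · have hh : h ≠ 1 := fun hh => hg (by simp [hh])
    have := hS h
    simp only [Prod.inv_mk, Prod.mk_mul_mk, inv_one, mul_one, C2_inv, chi_doubled_one h1,
      chi_doubled_ofAdd, add_mul, mul_add, Finset.sum_add_distrib, this, inv_mul_eq_one]
    simp [hh]
    ring
  · have := hS h
    simp only [Prod.inv_mk, Prod.mk_mul_mk, inv_one, one_mul, C2_inv, C2_mul_self,
      chi_doubled_one h1, chi_doubled_ofAdd, add_mul, mul_add, Finset.sum_add_distrib, this,
      inv_mul_eq_one]
    simp
    ring

end doubled

section dihedral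

variable {G : Type*} [CommGroup G]

/-- The set `M ∪ M t` in `Dih G`: its elements are those whose rotation part lies in `M`. -/
lemma dihedral_set_eq (M : Set G) :
    (fun g : G => (SemidirectProduct.inl g : GenDihedral G)) '' M ∪
        (fun g : G => SemidirectProduct.inl g * GenDihedral.t G) '' M
      = {p : GenDihedral G | p.left ∈ M} := by
  ext ⟨a, e⟩
  simp only [Set.mem_union, Set.mem_image, Set.mem_ofPred_eq]
  constructor
  · rintro (⟨x, hx, h⟩ | ⟨x, hx, h⟩)
    · have := congrArg SemidirectProduct.left h
      simp at this
      simpa [← this] using hx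
    · have := congrArg SemidirectProduct.left h
      simp [GenDihedral.t] at this
      simpa [← this] using hx
  · intro ha
    rcases C2_cases e with rfl | rfl
    · exact Or.inl ⟨a, ha, rfl⟩
    · exact Or.inr ⟨a, ha, by ext <;> simp [GenDihedral.t]⟩

noncomputable instance [Fintype G] : Fintype (GenDihedral G) :=
  Fintype.ofEquiv _ SemidirectProduct.equivProd.symm

lemma sum_dihedral [Fintype G] (F : GenDihedral G → ℤ) :
    ∑ p, F p = ∑ x : G, (F ⟨x, 1⟩ + F ⟨x, Multiplicative.ofAdd 1⟩) := by
  rw [← Equiv.sum_comp SemidirectProduct.equivProd.symm F, Fintype.sum_prod_type]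
  simp only [sum_C2]
  rfl

lemma chi_dihedral (M : Set G) (p : GenDihedral G) :
    chi {p : GenDihedral G | p.left ∈ M} p = chi M p.left := rfl

/-- In the group ring, `(M + M t)² = |M| • Dih G - (M + M t)`. -/
lemma conv_dihedral [Fintype G] [DecidableEq G] {M : Set G}
    (hM : ∀ x, chi M x + chi M x⁻¹ = 1 - if x = 1 then 1 else 0) (g : GenDihedral G) :
    ∑ x, chi {p : GenDihedral G | p.left ∈ M} x * chi {p : GenDihedral G | p.left ∈ M} (x⁻¹ * g)
      = M.ncard - chi {p : GenDihedral G | p.left ∈ M} g := by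
  have hinv : ∀ x : G, invHom G (Multiplicative.ofAdd 1) x = x⁻¹ := fun x => by
    simp [invHom]
  have key : ∀ x : G, chi M x * chi M (x⁻¹ * g.left) + chi M x * chi M (x * g.left⁻¹)
      = chi M x - if x = g.left then chi M x else 0 := fun x => by
    have := hM (x⁻¹ * g.left)
    rw [mul_inv, inv_inv] at this
    simp only [inv_mul_eq_one] at this
    rw [← mul_add, this]
    split_ifs <;> simp
  rw [sum_dihedral]
  simp only [chi_dihedral, SemidirectProduct.mul_left, SemidirectProduct.inv_left,
    SemidirectProduct.inv_right, C2_inv, hinv, inv_inv, inv_one, map_one, MulAut.one_apply, key,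
    Finset.sum_sub_distrib, sum_chi]
  simp

lemma ncard_dihedral [Fintype G] (M : Set G) :
    {p : GenDihedral G | p.left ∈ M}.ncard = 2 * M.ncard := by
  zify
  rw [← sum_chi, sum_dihedral]
  simp only [chi_dihedral, Finset.sum_add_distrib, sum_chi]
  ring

end dihedral

theorem stmt_17 {G : Type*} [CommGroup G] [Finite G] (m : ℕ) (hm : Nat.card G = m)
    (hm3 : 3 ≤ m) (hodd : Odd m)
    (M : Set G) (hskew : M ∩ M⁻¹ = ∅) (hMcard : M.ncard = (m - 1) / 2)
    (S : Set (GenDihedral G))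
    (hS : S = (fun g : G => (SemidirectProduct.inl g : GenDihedral G)) '' M ∪
        (fun g : G => SemidirectProduct.inl g * GenDihedral.t G) '' M) :
    (S.ncard = m - 1 ∧ IsPartialSumSet S ((m - 3) / 2) ((m - 1) / 2)) ∧
      ∃ T : Set (GenDihedral G × Multiplicative (ZMod 2)),
        T.ncard = 2 * m - 1 ∧ IsSumSet T (m - 1) := by
  classical
  have := Fintype.ofFinite G
  have hM := chi_add_chi_inv hm hodd hskew hMcard
  rw [dihedral_set_eq] at hS
  have hconv : ∀ g, ∑ x, chi S x * chi S (x⁻¹ * g) = M.ncard - chi S g := by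
    rw [hS]; exact conv_dihedral hM
  have hcard : S.ncard = 2 * M.ncard := by rw [hS]; exact ncard_dihedral M
  have h1 : (1 : GenDihedral G) ∉ S := by
    intro h
    have hone : (1 : G) ∈ M := by simpa [hS] using h
    have h2 : (1 : G) ∈ M ∩ M⁻¹ := ⟨hone, by simpa using hone⟩
    simp [hskew] at h2
  obtain ⟨k, hk⟩ := hodd
  have hMk : M.ncard = k := by omega
  refine ⟨⟨by omega, fun g hg _ => ?_, fun g hg _ => ?_⟩, doubled S, ?_, fun g hg => ?_⟩
  · have h := sumReps_eq_sum S g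
    rw [hconv, hMk, chi, if_pos hg] at h
    omega
  · have h := sumReps_eq_sum S g
    rw [hconv, hMk, chi, if_neg hg] at h
    omega
  · rw [ncard_doubled h1]
    omega
  · have h := sumReps_double h1 hconv hg
    omega
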